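/- For every finite word w over the alphabet {a, b, c, d}, one has S(σ²(w)) = 2·S(w) and S'(σ²(w)) = 2·S'(w). -/

import Mathlib

/-- The alphabet `{a, b, c, d}`. -/
inductive Letter : Type
  | a | b | c | d
deriving DecidableEq

open Letter

/-- The substitution `σ : a ↦ ab, b ↦ ac, c ↦ db, d ↦ dc`. -/
def sub : Letter → List Letter
  | a => [a, b]
  | b => [a, c]
  | c => [d, b]
  | d => [d, c]

/-- The substitution `σ` extended to finite words by concatenation. -/
def subw (w : List Letter) : List Letter := (w.map sub).flatten

/-- The coding `τ : a, b ↦ 1, c, d ↦ −1`. -/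
def τ : Letter → ℤ
  | a => 1
  | b => 1
  | c => -1
  | d => -1

/-- The coding `τ' : a, c ↦ 1, b, d ↦ −1`. -/
def τ' : Letter → ℤ
  | a => 1
  | b => -1
  | c => 1
  | d => -1

/-- `S(u)`: the sum of `τ` over the letters of `u`. -/
def S (u : List Letter) : ℤ := (u.map τ).sum

/-- `S'(u)`: the sum of `τ'` over the letters of `u`. -/
def S' (u : List Letter) : ℤ := (u.map τ').sum

/-!
The sums of the two codings satisfy `S ∘ σ = S + S'` and `S' ∘ σ = S - S'`, identities that
only have to be checked on letters. So `σ` acts on the pair `(S, S')` by the Hadamard matrix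
`!![1, 1; 1, -1]`, whose square is twice the identity.
-/

theorem sum_map_flatten_map {α β M : Type*} [AddMonoid M] (φ : β → M) (f : α → List β)
    (l : List α) : ((l.map f).flatten.map φ).sum = (l.map fun x => ((f x).map φ).sum).sum := by
  simp only [List.map_flatten, List.sum_flatten, List.map_map, Function.comp_def]

theorem list_sum_map_sub {α G : Type*} [SubtractionCommMonoid G] (l : List α) (f g : α → G) :
    (l.map fun x => f x - g x).sum = (l.map f).sum - (l.map g).sum := by
  simpa only [Multiset.map_coe, Multiset.sum_coe] using
    Multiset.sum_map_sub (m := (l : Multiset α)) (f := f) (g := g)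

theorem S_sub (x : Letter) : S (sub x) = τ x + τ' x := by
  cases x <;> rfl

theorem S'_sub (x : Letter) : S' (sub x) = τ x - τ' x := by
  cases x <;> rfl

theorem S_subw (w : List Letter) : S (subw w) = S w + S' w :=
  calc
    S (subw w) = (w.map fun x => S (sub x)).sum := sum_map_flatten_map τ sub w
    _ = (w.map fun x => τ x + τ' x).sum := by simp only [S_sub]
    _ = S w + S' w := List.sum_map_add

theorem S'_subw (w : List Letter) : S' (subw w) = S w - S' w :=
  calc
    S' (subw w) = (w.map fun x => S' (sub x)).sum := sum_map_flatten_map τ' sub w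
    _ = (w.map fun x => τ x - τ' x).sum := by simp only [S'_sub]
    _ = S w - S' w := list_sum_map_sub w τ τ'

/-- For every finite word `w` over `{a, b, c, d}`,
`S(σ²(w)) = 2·S(w)` and `S'(σ²(w)) = 2·S'(w)`. -/
theorem S_sub_sq (w : List Letter) :
    S (subw (subw w)) = 2 * S w ∧ S' (subw (subw w)) = 2 * S' w := by
  constructor
  · calc
      S (subw (subw w)) = S (subw w) + S' (subw w) := S_subw (subw w)
      _ = (S w + S' w) + (S w - S' w) := by rw [S_subw, S'_subw]
      _ = 2 * S w := by ring
  · calc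
      S' (subw (subw w)) = S (subw w) - S' (subw w) := S'_subw (subw w)
      _ = (S w + S' w) - (S w - S' w) := by rw [S_subw, S'_subw]
      _ = 2 * S' w := by ring
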